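/- Let A, ε ∈ ℝ with 0 < ε < 1 and A − ε > 1, and set N̄ = log((1−ε)²)/log((A−ε)/(A+ε)). If N̄ > 2, then N̄ > A + ε; moreover, if N̄ < 2, then N̄ < A + ε. -/

import Mathlib

/-!
With `δ = 2ε / (A + ε)` one has `(A - ε) / (A + ε) = 1 - δ`, so `N̄` is twice the logarithm of
`1 - ε` to base `1 - δ`, while `A + ε = 2 (ε / δ)`. That logarithm exceeds `1` exactly when
`δ < ε`. It exceeds `ε / δ` under the same condition, because the secant slope `log (1 - x) / x`
of the strictly concave logarithm is strictly decreasing in `x`. Hence `N̄` lies on the same side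
of `2` as of `A + ε`.
-/

open Set

section Logb

variable {b x : ℝ}

theorem one_lt_logb_iff_of_base_lt_one (hb0 : 0 < b) (hb1 : b < 1) (hx : 0 < x) :
    1 < Real.logb b x ↔ x < b := by
  rw [Real.lt_logb_iff_rpow_lt_of_base_lt_one hb0 hb1 hx, Real.rpow_one]

theorem logb_lt_one_iff_of_base_lt_one (hb0 : 0 < b) (hb1 : b < 1) (hx : 0 < x) :
    Real.logb b x < 1 ↔ b < x := by
  rw [Real.logb_lt_iff_lt_rpow_of_base_lt_one hb0 hb1 hx, Real.rpow_one]

end Logb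

section LogOneSub

variable {x y : ℝ}

theorem strictAntiOn_log_one_sub_div :
    StrictAntiOn (fun x : ℝ ↦ Real.log (1 - x) / x) (Iio 1 \ {0}) := by
  rintro x ⟨hx1 : x < 1, hx0 : x ≠ 0⟩ y ⟨hy1 : y < 1, hy0 : y ≠ 0⟩ hxy
  have secant_lt := strictConcaveOn_log_Ioi.secant_strict_mono (mem_Ioi.2 one_pos)
    (mem_Ioi.2 (sub_pos.2 hy1)) (mem_Ioi.2 (sub_pos.2 hx1))
    (by simpa using hy0) (by simpa using hx0) (sub_lt_sub_left hxy 1)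
  simpa [div_neg] using secant_lt

theorem div_lt_logb_one_sub_iff (hx : x ∈ Ioo 0 1) (hy : y ∈ Ioo 0 1) :
    x / y < Real.logb (1 - y) (1 - x) ↔ y < x := by
  have log_neg : Real.log (1 - y) < 0 := Real.log_neg (sub_pos.2 hy.2) (sub_lt_self 1 hy.1)
  calc x / y < Real.logb (1 - y) (1 - x)
      ↔ Real.log (1 - x) < x / y * Real.log (1 - y) := lt_div_iff_of_neg log_neg
    _ ↔ Real.log (1 - x) / x < Real.log (1 - y) / y := by
      rw [div_lt_iff₀ hx.1, div_mul_comm, mul_comm]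
    _ ↔ y < x := strictAntiOn_log_one_sub_div.lt_iff_gt ⟨hx.2, hx.1.ne'⟩ ⟨hy.2, hy.1.ne'⟩

theorem logb_one_sub_lt_div_iff (hx : x ∈ Ioo 0 1) (hy : y ∈ Ioo 0 1) :
    Real.logb (1 - y) (1 - x) < x / y ↔ x < y := by
  have log_neg : Real.log (1 - y) < 0 := Real.log_neg (sub_pos.2 hy.2) (sub_lt_self 1 hy.1)
  calc Real.logb (1 - y) (1 - x) < x / y
      ↔ x / y * Real.log (1 - y) < Real.log (1 - x) := div_lt_iff_of_neg log_neg
    _ ↔ Real.log (1 - y) / y < Real.log (1 - x) / x := by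
      rw [lt_div_iff₀ hx.1, div_mul_comm, mul_comm]
    _ ↔ x < y := strictAntiOn_log_one_sub_div.lt_iff_gt ⟨hy.2, hy.1.ne'⟩ ⟨hx.2, hx.1.ne'⟩

end LogOneSub

theorem stmt_12_general (A ε : ℝ) (hε0 : 0 < ε) (hε1 : ε < 1) (hA : ε < A)
    (Nbar : ℝ) (hNbar : Nbar = Real.log ((1 - ε) ^ 2) / Real.log ((A - ε) / (A + ε))) :
    (2 < Nbar ↔ A + ε < Nbar) ∧ (Nbar < 2 ↔ Nbar < A + ε) := by
  have sum_pos : 0 < A + ε := by linarith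
  obtain ⟨δ, hδ⟩ : ∃ δ, δ = 2 * ε / (A + ε) := ⟨_, rfl⟩
  have δ_mem : δ ∈ Ioo 0 1 := by
    rw [hδ]
    exact ⟨by positivity, (div_lt_one sum_pos).2 (by linarith)⟩
  have ratio_eq : (A - ε) / (A + ε) = 1 - δ := by
    rw [hδ]
    field_simp
    ring
  have sum_eq : A + ε = 2 * (ε / δ) := by
    rw [hδ]
    field_simp
  have Nbar_eq : Nbar = 2 * Real.logb (1 - δ) (1 - ε) := by
    rw [hNbar, ratio_eq, Real.log_div_log, Real.logb_pow, Nat.cast_ofNat]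
  have base_pos : 0 < 1 - δ := sub_pos.2 δ_mem.2
  have base_lt_one : 1 - δ < 1 := sub_lt_self 1 δ_mem.1
  have arg_pos : 0 < 1 - ε := sub_pos.2 hε1
  rw [Nbar_eq, sum_eq, mul_lt_mul_iff_right₀ two_pos, mul_lt_mul_iff_right₀ two_pos,
    lt_mul_iff_one_lt_right two_pos, mul_lt_iff_lt_one_right two_pos,
    one_lt_logb_iff_of_base_lt_one base_pos base_lt_one arg_pos,
    logb_lt_one_iff_of_base_lt_one base_pos base_lt_one arg_pos,
    div_lt_logb_one_sub_iff ⟨hε0, hε1⟩ δ_mem, logb_one_sub_lt_div_iff ⟨hε0, hε1⟩ δ_mem]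
  exact ⟨sub_lt_sub_iff_left 1, sub_lt_sub_iff_left 1⟩

/-- Comparison of the uncertain-plant threshold `N̄` with the worst-case known-plant
quantity `A + ε`: if `N̄ > 2` then `N̄ > A + ε`, and if `N̄ < 2` then `N̄ < A + ε`. -/
theorem stmt_12 (A ε : ℝ) (hε0 : 0 < ε) (hε1 : ε < 1) (hA : 1 < A - ε)
    (Nbar : ℝ) (hNbar : Nbar = Real.log ((1 - ε) ^ 2) / Real.log ((A - ε) / (A + ε))) :
    (2 < Nbar → A + ε < Nbar) ∧ (Nbar < 2 → Nbar < A + ε) :=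
  (stmt_12_general A ε hε0 hε1 (by linarith) Nbar hNbar).imp Iff.mp Iff.mp
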